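/- arXiv:1207.6128 — 3 statements merged into one kernel-verified Lean document; each statement's English description precedes it below -/
import Mathlib

section
/- Let P ⊆ ℝⁿ be a convex body containing 0 in its interior, let φ : ℝⁿ → ℝ be convex with φ − φ_P bounded on ℝⁿ, and let v : ℝⁿ → ℝ be a bounded continuous function. For t ∈ ℝ define f(t) := ∫_P (φ + t·v)*(p) dp, where (φ + t·v)*(p) = sup_{x ∈ ℝⁿ}(⟨p, x⟩ − φ(x) − t·v(x)). Then f is differentiable at t = 0 and f'(0) = − ∫_P v(∇φ*(p)) dp, where ∇φ*(p) denotes the gradient of the convex function φ*, which exists for Lebesgue-almost every p ∈ P. -/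
open scoped InnerProductSpace
open MeasureTheory

/-- The support function `φ_P(x) = sup_{p ∈ P} ⟨x, p⟫` of a set `P`. -/
noncomputable def suppFn {n : ℕ} (P : Set (EuclideanSpace ℝ (Fin n)))
    (x : EuclideanSpace ℝ (Fin n)) : ℝ :=
  ⨆ p : P, ⟪x, (p : EuclideanSpace ℝ (Fin n))⟫_ℝ

/-- The (real-valued) Legendre transform `φ*(p) = sup_x (⟨p, x⟩ - φ(x))`. -/
noncomputable def legendre {n : ℕ} (φ : EuclideanSpace ℝ (Fin n) → ℝ)
    (p : EuclideanSpace ℝ (Fin n)) : ℝ :=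
  ⨆ x, (⟪p, x⟫_ℝ - φ x)

/-- The Legendre transform with values in `ℝ ∪ {+∞}` (as a sup of real numbers
over a nonempty index it never takes the value `-∞`). -/
noncomputable def legendreE {n : ℕ} (φ : EuclideanSpace ℝ (Fin n) → ℝ)
    (p : EuclideanSpace ℝ (Fin n)) : EReal :=
  ⨆ x, ((⟪p, x⟫_ℝ - φ x : ℝ) : EReal)

/-!
Differentiability of `φ*` at an interior point `p` of its domain forces every sequence maximizing
`x ↦ ⟨p, x⟩ - φ x` to converge to `∇φ*(p)` (Šmulian). As `v` is continuous and bounded, the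
envelope argument of Danskin then gives `d/dt (φ + t v)*(p) = -v (∇φ*(p))` at `t = 0`. The convex
function `φ*` is differentiable almost everywhere by Rademacher's theorem, the frontier of the
convex set `P` is null, and `t ↦ (φ + t v)*(p)` is Lipschitz with constant `sup |v|` uniformly in
`p`, so dominated convergence allows differentiating under the integral.
-/

open Filter Topology

section SupremumOfFamily

variable {ι : Type*} {a w : ι → ℝ} {M : ℝ}

theorem bddAbove_range_add_mul (ha : BddAbove (Set.range a)) (hw : ∀ i, |w i| ≤ M) (t : ℝ) :
    BddAbove (Set.range fun i => a i + t * w i) := by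
  have htw : BddAbove (Set.range fun i => t * w i) :=
    ⟨|t| * M, Set.forall_mem_range.2 fun i =>
      (le_abs_self _).trans <| by rw [abs_mul]; gcongr; exact hw i⟩
  exact ha.range_add htw

theorem lipschitzWith_ciSup_add_mul [Nonempty ι] (ha : BddAbove (Set.range a))
    (hw : ∀ i, |w i| ≤ M) :
    LipschitzWith M.toNNReal fun t : ℝ => ⨆ i, (a i + t * w i) := by
  refine LipschitzWith.of_le_add_mul' M fun s t => ciSup_le fun i => ?_
  have hi : a i + t * w i ≤ ⨆ i, (a i + t * w i) := le_ciSup (bddAbove_range_add_mul ha hw t) i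
  have hst : (s - t) * w i ≤ M * dist s t := by
    rw [mul_comm M, Real.dist_eq]
    exact (le_abs_self _).trans <| by rw [abs_mul]; gcongr; exact hw i
  linarith

/-- Danskin's envelope theorem at `t = 0`. The limit along `comap a (𝓝 (⨆ i, a i))` says that
`w` converges to `w₀` along every maximizing sequence for `a`. -/
theorem hasDerivAt_ciSup_add_mul [Nonempty ι] {w₀ : ℝ} (ha : BddAbove (Set.range a))
    (hw : ∀ i, |w i| ≤ M) (hlim : Tendsto w (comap a (𝓝 (⨆ i, a i))) (𝓝 w₀)) :
    HasDerivAt (fun t : ℝ => ⨆ i, (a i + t * w i)) w₀ 0 := by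
  rw [hasDerivAt_iff_isLittleO, Asymptotics.isLittleO_iff]
  intro c hc
  set S := ⨆ i, a i
  obtain ⟨η, hη, hnear⟩ := ((Metric.nhds_basis_ball.comap a).tendsto_iff
    Metric.nhds_basis_closedBall).1 hlim c hc
  have hmul_near : ∀ t i, S - η < a i → |t * w i - t * w₀| ≤ |t| * c := fun t i hi => by
    have haS : |a i - S| < η := abs_sub_lt_iff.2 ⟨by linarith [le_ciSup ha i], by linarith⟩
    rw [← mul_sub, abs_mul]
    gcongr
    exact hnear i haS
  have hsmall : ∀ᶠ t : ℝ in 𝓝 0, |t| * (M + |w₀|) < η :=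
    ContinuousAt.eventually_lt (by fun_prop) continuousAt_const (by simpa using hη)
  filter_upwards [hsmall] with t ht
  have hupper : ⨆ i, (a i + t * w i) ≤ S + t * w₀ + |t| * c := ciSup_le fun i => by
    rcases lt_or_ge (S - η) (a i) with hi | hi
    · linarith [le_ciSup ha i, le_of_abs_le (hmul_near t i hi)]
    · have htw : t * (w i - w₀) ≤ |t| * (M + |w₀|) :=
        (le_abs_self _).trans <| by
          rw [abs_mul]
          gcongr
          exact (abs_sub _ _).trans (by gcongr; exact hw i)
      have : 0 ≤ |t| * c := by positivity
      linarith
  have hlower : S + t * w₀ - |t| * c ≤ ⨆ i, (a i + t * w i) := by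
    refine le_of_forall_pos_le_add fun ε hε => ?_
    obtain ⟨i, hi⟩ := exists_lt_of_lt_ciSup (sub_lt_self S (lt_min hε hη))
    have hiη : S - η < a i := (sub_le_sub_left (min_le_right ε η) S).trans_lt hi
    linarith [min_le_left ε η, neg_le_of_abs_le (hmul_near t i hiη),
      le_ciSup (bddAbove_range_add_mul ha hw t) i]
  simp only [zero_mul, add_zero, sub_zero, smul_eq_mul, Real.norm_eq_abs]
  exact abs_le.2 ⟨by linarith, by linarith⟩

theorem hasDerivAt_integral_ciSup_add_mul [Nonempty ι] {α : Type*} [MeasurableSpace α]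
    {μ : Measure α} [IsFiniteMeasure μ] {a : α → ι → ℝ} {w₀ : α → ℝ}
    (hmeas : ∀ t : ℝ, AEStronglyMeasurable (fun p => ⨆ i, (a p i + t * w i)) μ)
    (hint : Integrable (fun p => ⨆ i, a p i) μ) (hw₀ : AEStronglyMeasurable w₀ μ)
    (ha : ∀ᵐ p ∂μ, BddAbove (Set.range (a p))) (hw : ∀ i, |w i| ≤ M)
    (hlim : ∀ᵐ p ∂μ, Tendsto w (comap (a p) (𝓝 (⨆ i, a p i))) (𝓝 (w₀ p))) :
    HasDerivAt (fun t : ℝ => ∫ p, ⨆ i, (a p i + t * w i) ∂μ) (∫ p, w₀ p ∂μ) 0 := by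
  have hM : 0 ≤ M := (abs_nonneg _).trans (hw (Classical.arbitrary ι))
  refine (hasDerivAt_integral_of_dominated_loc_of_lip (bound := fun _ => M) univ_mem
    (.of_forall hmeas) (by simpa using hint) hw₀ ?_ (integrable_const M) ?_).2
  · filter_upwards [ha] with p hp
    rw [Real.nnabs_of_nonneg hM]
    exact (lipschitzWith_ciSup_add_mul hp hw).lipschitzOnWith
  · filter_upwards [ha, hlim] with p hp hlimp
    exact hasDerivAt_ciSup_add_mul hp hw hlimp

end SupremumOfFamily

/-- Šmulian's criterion: the limit along `comap` says that every sequence maximizing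
`x ↦ ⟪p, x⟫ - φ x` converges to the gradient. -/
theorem tendsto_comap_inner_sub_nhds_of_hasGradientAt {E : Type*} [NormedAddCommGroup E]
    [InnerProductSpace ℝ E] [CompleteSpace E] {g φ : E → ℝ} {p x₀ : E}
    (hg : HasGradientAt g x₀ p) (hle : ∀ᶠ q in 𝓝 p, ∀ x, ⟪q, x⟫_ℝ - φ x ≤ g q) :
    Tendsto id (comap (fun x => ⟪p, x⟫_ℝ - φ x) (𝓝 (g p))) (𝓝 x₀) := by
  refine ((Metric.nhds_basis_ball.comap _).tendsto_iff Metric.nhds_basis_ball).2 fun δ hδ => ?_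
  obtain ⟨r, hr, hball⟩ := Metric.nhds_basis_closedBall.eventually_iff.1
    (((hasGradientAt_iff_isLittleO.1 hg).def (half_pos hδ)).and hle)
  refine ⟨r * (δ / 2), by positivity, fun x hx => ?_⟩
  -- Test the affine minorant of `x` at `p` shifted by `r` in the direction `x - x₀`.
  set d : E := r • ‖x - x₀‖⁻¹ • (x - x₀)
  have hd_norm : ‖d‖ ≤ r := by
    rw [norm_smul, Real.norm_of_nonneg hr.le]
    exact mul_le_of_le_one_right hr.le
      (mem_closedBall_zero_iff.1 (inv_norm_smul_mem_unitClosedBall _))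
  have hd_inner : ⟪d, x⟫_ℝ - ⟪x₀, d⟫_ℝ = r * ‖x - x₀‖ := by
    rw [real_inner_comm d x₀, ← inner_sub_right, real_inner_smul_left, real_inner_smul_left,
      real_inner_self_eq_norm_sq]
    rcases eq_or_ne ‖x - x₀‖ 0 with h | h
    · simp [h]
    · field_simp
  obtain ⟨hdiff, hminorant⟩ := @hball (p + d) (by simpa [dist_eq_norm] using hd_norm)
  have hg_upper : g (p + d) - g p - ⟪x₀, d⟫_ℝ ≤ δ / 2 * r := by
    rw [add_sub_cancel_left] at hdiff
    exact (le_of_abs_le hdiff).trans (by gcongr)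
  have hx_near : g p - r * (δ / 2) < ⟪p, x⟫_ℝ - φ x := by
    linarith [(abs_sub_lt_iff.1 (Metric.mem_ball.1 hx)).2]
  have hx_minorant := hminorant x
  rw [inner_add_left] at hx_minorant
  rw [id, mem_ball_iff_norm]
  exact lt_of_mul_lt_mul_left (by linarith) hr.le

theorem convexOn_ciSup {ι E : Type*} [Nonempty ι] [AddCommGroup E] [Module ℝ E] {s : Set E}
    {f : ι → E → ℝ} (hf : ∀ i, ConvexOn ℝ s (f i))
    (hbdd : ∀ x ∈ s, BddAbove (Set.range fun i => f i x)) :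
    ConvexOn ℝ s fun x => ⨆ i, f i x := by
  refine ⟨(hf (Classical.arbitrary ι)).1, fun x hx y hy c d hc hd hcd => ciSup_le fun i => ?_⟩
  refine ((hf i).2 hx hy hc hd hcd).trans ?_
  gcongr
  · exact le_ciSup (hbdd x hx) i
  · exact le_ciSup (hbdd y hy) i

section FiniteDimensional

variable {E : Type*} [NormedAddCommGroup E] [NormedSpace ℝ E] [FiniteDimensional ℝ E]
  [MeasurableSpace E] [BorelSpace E] (μ : Measure E) [μ.IsAddHaarMeasure]

theorem ae_differentiableAt_of_locallyLipschitzOn {F : Type*} [NormedAddCommGroup F]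
    [NormedSpace ℝ F] [FiniteDimensional ℝ F] {s : Set E} {f : E → F} (hs : IsOpen s)
    (hf : LocallyLipschitzOn s f) : ∀ᵐ x ∂μ, x ∈ s → DifferentiableAt ℝ f x := by
  rw [ae_iff]
  refine measure_null_of_locally_null _ fun x hx => ?_
  obtain ⟨hxs, -⟩ := Classical.not_imp.1 hx
  obtain ⟨K, t, ht, hK⟩ := hf hxs
  rw [hs.nhdsWithin_eq hxs] at ht
  refine ⟨_, inter_mem_nhdsWithin _ (interior_mem_nhds.2 ht), measure_mono_null ?_ (ae_iff.1
    ((hK.mono interior_subset).ae_differentiableWithinAt_of_mem (μ := μ)))⟩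
  rintro y ⟨hy, hyt⟩ hdiff
  exact hy fun _ => (hdiff hyt).differentiableAt (isOpen_interior.mem_nhds hyt)

variable {s : Set E} {f : E → ℝ}

theorem restrict_interior_of_convex (hs : Convex ℝ s) : μ.restrict (interior s) = μ.restrict s :=
  Measure.restrict_congr_set (interior_ae_eq_of_null_frontier (hs.addHaar_frontier μ))

theorem ae_restrict_mem_interior_of_convex (hs : Convex ℝ s) :
    ∀ᵐ x ∂μ.restrict s, x ∈ interior s := by
  rw [← restrict_interior_of_convex μ hs]
  exact ae_restrict_mem isOpen_interior.measurableSet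

theorem ae_restrict_differentiableAt_of_convexOn (hf : ConvexOn ℝ s f) :
    ∀ᵐ x ∂μ.restrict s, DifferentiableAt ℝ f x := by
  filter_upwards [ae_restrict_mem_interior_of_convex μ hf.1, ae_restrict_of_ae
    (ae_differentiableAt_of_locallyLipschitzOn μ isOpen_interior hf.locallyLipschitzOn_interior)]
    with x hx hdiff using hdiff hx

theorem aestronglyMeasurable_restrict_of_convexOn (hf : ConvexOn ℝ s f) :
    AEStronglyMeasurable f (μ.restrict s) := by
  rw [← restrict_interior_of_convex μ hf.1]
  exact hf.continuousOn_interior.aestronglyMeasurable isOpen_interior.measurableSet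

end FiniteDimensional

theorem measurable_gradient {E : Type*} [NormedAddCommGroup E] [InnerProductSpace ℝ E]
    [CompleteSpace E] [MeasurableSpace E] [BorelSpace E] (f : E → ℝ) :
    Measurable (gradient f) :=
  (InnerProductSpace.toDual ℝ E).symm.continuous.measurable.comp (measurable_fderiv ℝ f)

section Legendre

variable {n : ℕ} {P : Set (EuclideanSpace ℝ (Fin n))} {φ v : EuclideanSpace ℝ (Fin n) → ℝ}
  {p : EuclideanSpace ℝ (Fin n)} {M : ℝ}

theorem inner_le_suppFn (hP : Bornology.IsBounded P) (hp : p ∈ P) (x : EuclideanSpace ℝ (Fin n)) :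
    ⟪p, x⟫_ℝ ≤ suppFn P x := by
  obtain ⟨R, hR⟩ := hP.exists_norm_le
  have hbdd : BddAbove (Set.range fun q : P => ⟪x, (q : EuclideanSpace ℝ (Fin n))⟫_ℝ) :=
    ⟨‖x‖ * R, Set.forall_mem_range.2 fun q =>
      (real_inner_le_norm x q).trans (by gcongr; exact hR q q.2)⟩
  rw [real_inner_comm]
  exact le_ciSup hbdd ⟨p, hp⟩

theorem inner_sub_le_of_suppFn_sub_le {C : ℝ} (hP : Bornology.IsBounded P)
    (hC : ∀ x, suppFn P x - φ x ≤ C) (hp : p ∈ P) (x : EuclideanSpace ℝ (Fin n)) :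
    ⟪p, x⟫_ℝ - φ x ≤ C :=
  (sub_le_sub_right (inner_le_suppFn hP hp x) _).trans (hC x)

theorem legendre_add_mul (φ v : EuclideanSpace ℝ (Fin n) → ℝ) (t : ℝ) :
    legendre (fun x => φ x + t * v x) = fun p => ⨆ x, (⟪p, x⟫_ℝ - φ x + t * -v x) :=
  funext fun p => iSup_congr fun x => by ring

theorem convexOn_legendre (hP : Convex ℝ P)
    (hφ : ∀ p ∈ P, BddAbove (Set.range fun x => ⟪p, x⟫_ℝ - φ x)) :
    ConvexOn ℝ P (legendre φ) :=
  convexOn_ciSup (f := fun x p => ⟪p, x⟫_ℝ - φ x)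
    (fun x => (((innerₗ _).flip x).convexOn hP).sub (concaveOn_const (φ x) hP)) hφ

theorem tendsto_comap_nhds_gradient_legendre
    (hφ : ∀ q ∈ P, BddAbove (Set.range fun x => ⟪q, x⟫_ℝ - φ x)) (hp : p ∈ interior P)
    (hdiff : DifferentiableAt ℝ (legendre φ) p) :
    Tendsto id (comap (fun x => ⟪p, x⟫_ℝ - φ x) (𝓝 (legendre φ p)))
      (𝓝 (gradient (legendre φ) p)) :=
  tendsto_comap_inner_sub_nhds_of_hasGradientAt hdiff.hasGradientAt <|
    mem_of_superset (mem_interior_iff_mem_nhds.1 hp) fun q hq => le_ciSup (hφ q hq)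

theorem integrableOn_legendre {C : ℝ} (hP : Convex ℝ P) (hvol : volume P ≠ ⊤)
    (hC : ∀ p ∈ P, ∀ x, ⟪p, x⟫_ℝ - φ x ≤ C) : IntegrableOn (legendre φ) P := by
  have hbdd : ∀ p ∈ P, BddAbove (Set.range fun x => ⟪p, x⟫_ℝ - φ x) := fun p hp =>
    ⟨C, Set.forall_mem_range.2 (hC p hp)⟩
  have : IsFiniteMeasure (volume.restrict P) := isFiniteMeasure_restrict.2 hvol
  refine Integrable.of_mem_Icc (-φ 0) C
    (aestronglyMeasurable_restrict_of_convexOn volume (convexOn_legendre hP hbdd)).aemeasurable ?_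
  filter_upwards [ae_restrict_mem₀ (hP.nullMeasurableSet volume)] with p hp
  exact ⟨by simpa [legendre] using le_ciSup (hbdd p hp) 0, ciSup_le (hC p hp)⟩

theorem aestronglyMeasurable_legendre_add_mul (hP : Convex ℝ P)
    (hφ : ∀ p ∈ P, BddAbove (Set.range fun x => ⟪p, x⟫_ℝ - φ x)) (hvM : ∀ x, |v x| ≤ M) (t : ℝ) :
    AEStronglyMeasurable (legendre fun x => φ x + t * v x) (volume.restrict P) := by
  refine aestronglyMeasurable_restrict_of_convexOn volume (convexOn_legendre hP fun p hp => ?_)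
  convert bddAbove_range_add_mul (w := fun x => -v x) (hφ p hp) (by simpa using hvM) t using 3
  ring

theorem statement12_general (hP : Convex ℝ P) (hvol : volume P ≠ ⊤)
    (hφ : ∀ p ∈ P, BddAbove (Set.range fun x => ⟪p, x⟫_ℝ - φ x))
    (hint : IntegrableOn (legendre φ) P) (hv : Continuous v) (hvM : ∀ x, |v x| ≤ M) :
    (∀ᵐ p ∂(volume.restrict P), DifferentiableAt ℝ (legendre φ) p) ∧
    HasDerivAt (fun t : ℝ => ∫ p in P, legendre (fun x => φ x + t * v x) p)
      (-∫ p in P, v (gradient (legendre φ) p)) 0 := by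
  have hdiff := ae_restrict_differentiableAt_of_convexOn volume (convexOn_legendre hP hφ)
  refine ⟨hdiff, ?_⟩
  have : IsFiniteMeasure (volume.restrict P) := isFiniteMeasure_restrict.2 hvol
  have hmeas := aestronglyMeasurable_legendre_add_mul hP hφ hvM
  simp only [legendre_add_mul] at hmeas ⊢
  rw [← integral_neg]
  refine hasDerivAt_integral_ciSup_add_mul hmeas hint
    (hv.measurable.comp (measurable_gradient _)).neg.aestronglyMeasurable ?_
    (by simpa using hvM) ?_
  · exact (ae_restrict_mem₀ (hP.nullMeasurableSet volume)).mono hφ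
  · filter_upwards [hdiff, ae_restrict_mem_interior_of_convex volume hP] with p hp hpP
    exact (hv.neg.tendsto _).comp (tendsto_comap_nhds_gradient_legendre hφ hpP hp)

end Legendre

/-- Let `φ` be convex with `φ - φ_P` bounded and let `v` be
bounded and continuous. Then `φ*` is differentiable at Lebesgue-a.e. point of
`P`, and `f(t) := ∫_P (φ + t v)* dp` is differentiable at `t = 0` with
`f'(0) = -∫_P v(∇φ*(p)) dp`. -/
theorem statement12 {n : ℕ} (P : Set (EuclideanSpace ℝ (Fin n)))
    (hPcomp : IsCompact P) (hPconv : Convex ℝ P)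
    (h0 : (0 : EuclideanSpace ℝ (Fin n)) ∈ interior P)
    (φ : EuclideanSpace ℝ (Fin n) → ℝ)
    (hφconv : ConvexOn ℝ Set.univ φ)
    (hbd : ∃ C : ℝ, ∀ x, |φ x - suppFn P x| ≤ C)
    (v : EuclideanSpace ℝ (Fin n) → ℝ)
    (hv : Continuous v) (hvb : ∃ M : ℝ, ∀ x, |v x| ≤ M) :
    (∀ᵐ p ∂(volume.restrict P), DifferentiableAt ℝ (legendre φ) p) ∧
    HasDerivAt (fun t : ℝ => ∫ p in P, legendre (fun x => φ x + t * v x) p)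
      (-∫ p in P, v (gradient (legendre φ) p)) 0 := by
  obtain ⟨C, hC⟩ := hbd
  obtain ⟨M, hM⟩ := hvb
  have hle p (hp : p ∈ P) := inner_sub_le_of_suppFn_sub_le hPcomp.isBounded
    (fun x => (abs_sub_le_iff.1 (hC x)).2) hp
  exact statement12_general hPconv hPcomp.measure_ne_top
    (fun p hp => ⟨C, Set.forall_mem_range.2 (hle p hp)⟩)
    (integrableOn_legendre hPconv hPcomp.measure_ne_top hle) hv hM
end

section
/- Let P ⊆ ℝⁿ be a convex body containing 0 in its interior, and let u₀, u₁ : P → ℝ be bounded functions. For t ∈ [0,1] define φ_t(x) := sup_{p ∈ P} (⟨p, x⟩ − (1−t)·u₀(p) − t·u₁(p)). Then the function t ↦ log ∫_{ℝⁿ} e^{−φ_t(x)} dx is finite and concave on [0,1]. -/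
open scoped InnerProductSpace
open MeasureTheory

/-!
By the Prékopa–Leindler inequality, integrating out a variable preserves log-concavity: if
`Φ(t, x)` is jointly convex, then `log ∫ exp (-Φ(t, x)) dx` is concave in `t`. The function
`(t, x) ↦ φ_t x` is jointly convex because it is a supremum of functions affine in `(t, x)`.
It grows at least like `ε ‖x‖` because `P` contains a ball around `0` and the `u_i` are bounded,
which makes `exp (-φ_t)` integrable.

On the line, the Prékopa–Leindler inequality is the Brunn–Minkowski inequality
`|A| + |B| ≤ |A + B|` applied to superlevel sets and integrated over the levels. The inequality
passes to product measures by Fubini, and from there to all Haar measures by a linear change of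
variables.
-/

open Set Filter Topology
open scoped ENNReal

section BrunnMinkowski

open scoped Pointwise

theorem volume_add_volume_le_of_isGreatest_of_isLeast {A B : Set ℝ} {a b : ℝ}
    (ha : IsGreatest A a) (hb : IsLeast B b) (hB : MeasurableSet B) :
    volume A + volume B ≤ volume (A + B) := by
  -- The translates `b + A` and `a + B` lie in `A + B` and meet only at `a + b`.
  have hdisj : AEDisjoint volume (b +ᵥ A) (a +ᵥ B) := by
    refine measure_mono_null (t := {a + b}) ?_ (measure_singleton _)
    rintro _ ⟨⟨x, hx, rfl⟩, ⟨y, hy, hxy⟩⟩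
    have hxa : x ≤ a := ha.2 hx
    have hby : b ≤ y := hb.2 hy
    simp only [vadd_eq_add, mem_singleton_iff] at hxy ⊢
    linarith
  calc volume A + volume B = volume (b +ᵥ A) + volume (a +ᵥ B) := by simp only [measure_vadd]
    _ = volume ((b +ᵥ A) ∪ (a +ᵥ B)) :=
      (measure_union₀ (hB.const_vadd a).nullMeasurableSet hdisj).symm
    _ ≤ volume (A + B) := measure_mono <| union_subset
      (by rw [add_comm A]; exact vadd_set_subset_add hb.1) (vadd_set_subset_add ha.1)

theorem volume_add_volume_le_volume_add {A B : Set ℝ} (hA : MeasurableSet A)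
    (hB : MeasurableSet B) (hA₀ : A.Nonempty) (hB₀ : B.Nonempty) :
    volume A + volume B ≤ volume (A + B) := by
  obtain ⟨a, ha⟩ := hA₀
  obtain ⟨b, hb⟩ := hB₀
  have compact_le : ∀ K ⊆ A, IsCompact K → ∀ L ⊆ B, IsCompact L →
      volume K + volume L ≤ volume (A + B) := by
    intro K hKA hK L hLB hL
    obtain ⟨k, hk⟩ := (hK.insert a).exists_isGreatest (insert_nonempty a K)
    obtain ⟨l, hl⟩ := (hL.insert b).exists_isLeast (insert_nonempty b L)
    calc volume K + volume L ≤ volume (insert a K) + volume (insert b L) := by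
          gcongr <;> exact subset_insert _ _
      _ ≤ volume (insert a K + insert b L) :=
          volume_add_volume_le_of_isGreatest_of_isLeast hk hl (hL.insert b).measurableSet
      _ ≤ volume (A + B) :=
          measure_mono (add_subset_add (insert_subset ha hKA) (insert_subset hb hLB))
  rw [hA.measure_eq_iSup_isCompact, hB.measure_eq_iSup_isCompact]
  simp only [iSup_and']
  exact ENNReal.biSup_add_biSup_le' ⟨∅, empty_subset A, isCompact_empty⟩
    ⟨∅, empty_subset B, isCompact_empty⟩
    fun K hK L hL => compact_le K hK.1 hK.2 L hL.1 hL.2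

theorem ofReal_mul_volume_superlevel_add_le {a b : ℝ} (ha : 0 < a) (hb : 0 < b) (hab : a + b = 1)
    {f g h : ℝ → ℝ≥0∞} (hf : Measurable f) (hg : Measurable g)
    (hfgh : ∀ x y, f x ^ a * g y ^ b ≤ h (a • x + b • y)) {r : ℝ≥0∞}
    (hrf : ∃ x, r < f x) (hrg : ∃ x, r < g x) :
    ENNReal.ofReal a * volume {x | r < f x} + ENNReal.ofReal b * volume {x | r < g x} ≤
      volume {x | r < h x} := by
  have ofReal_mul_volume : ∀ {c : ℝ}, 0 < c → ∀ s : Set ℝ,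
      ENNReal.ofReal c * volume s = volume (c • s) := fun hc s => by
    simp [Measure.addHaar_smul, abs_of_pos hc]
  have smul_superlevel_add_subset :
      a • {x | r < f x} + b • {x | r < g x} ⊆ {x | r < h x} := by
    rintro _ ⟨_, ⟨x, hx, rfl⟩, _, ⟨y, hy, rfl⟩, rfl⟩
    calc r = r ^ a * r ^ b := by
          rw [← ENNReal.rpow_add_of_nonneg _ _ ha.le hb.le, hab, ENNReal.rpow_one]
      _ < f x ^ a * g y ^ b :=
          ENNReal.mul_lt_mul (ENNReal.rpow_lt_rpow hx ha) (ENNReal.rpow_lt_rpow hy hb)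
      _ ≤ h (a • x + b • y) := hfgh x y
  rw [ofReal_mul_volume ha, ofReal_mul_volume hb]
  exact (volume_add_volume_le_volume_add
    ((measurableSet_lt measurable_const hf).const_smul_of_ne_zero ha.ne')
    ((measurableSet_lt measurable_const hg).const_smul_of_ne_zero hb.ne')
    (Nonempty.smul_set hrf) (Nonempty.smul_set hrg)).trans
    (measure_mono smul_superlevel_add_subset)

end BrunnMinkowski

theorem lintegral_eq_lintegral_measure_ofReal_lt {α : Type*} [MeasurableSpace α] (μ : Measure α)
    {f : α → ℝ≥0∞} (hf : Measurable f) (hf_top : ∀ x, f x ≠ ∞) :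
    ∫⁻ x, f x ∂μ = ∫⁻ t in Ioi (0 : ℝ), μ {x | ENNReal.ofReal t < f x} := by
  calc ∫⁻ x, f x ∂μ = ∫⁻ x, ENNReal.ofReal (f x).toReal ∂μ := by
        simp only [ENNReal.ofReal_toReal (hf_top _)]
    _ = ∫⁻ t in Ioi (0 : ℝ), μ {x | t < (f x).toReal} :=
        lintegral_eq_lintegral_meas_lt μ (.of_forall fun _ => ENNReal.toReal_nonneg)
          hf.ennreal_toReal.aemeasurable
    _ = ∫⁻ t in Ioi (0 : ℝ), μ {x | ENNReal.ofReal t < f x} :=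
        setLIntegral_congr_fun measurableSet_Ioi fun t ht => by
          simp only [ENNReal.ofReal_lt_iff_lt_toReal (le_of_lt ht) (hf_top _)]

theorem tendsto_lintegral_min_natCast {α : Type*} [MeasurableSpace α] (μ : Measure α)
    {f : α → ℝ≥0∞} (hf : Measurable f) :
    Tendsto (fun N : ℕ => ∫⁻ x, min (f x) N ∂μ) atTop (𝓝 (∫⁻ x, f x ∂μ)) := by
  refine lintegral_tendsto_of_tendsto_of_monotone
    (fun N => (hf.min measurable_const).aemeasurable)
    (.of_forall fun x N M hNM => min_le_min_left (f x) (Nat.cast_le.2 hNM))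
    (.of_forall fun x => ?_)
  simpa only [min_top_right] using
    (tendsto_const_nhds (x := f x)).min ENNReal.tendsto_nat_nhds_top

theorem ennreal_geom_mean_le_arith_mean2_weighted {a b : ℝ} (ha : 0 < a) (hb : 0 < b)
    (hab : a + b = 1) (x y : ℝ≥0∞) :
    x ^ a * y ^ b ≤ ENNReal.ofReal a * x + ENNReal.ofReal b * y := by
  calc x ^ a * y ^ b ≤ (x ^ a) ^ a⁻¹ / ENNReal.ofReal a⁻¹ + (y ^ b) ^ b⁻¹ / ENNReal.ofReal b⁻¹ :=
        ENNReal.young_inequality _ _ (Real.HolderConjugate.inv_inv ha hb hab)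
    _ = ENNReal.ofReal a * x + ENNReal.ofReal b * y := by
        rw [ENNReal.rpow_rpow_inv ha.ne', ENNReal.rpow_rpow_inv hb.ne',
          ENNReal.ofReal_inv_of_pos ha, ENNReal.ofReal_inv_of_pos hb, ENNReal.div_eq_inv_mul,
          ENNReal.div_eq_inv_mul, inv_inv, inv_inv]

section PrekopaLeindler

variable {E F : Type*} [AddCommGroup E] [Module ℝ E] [MeasurableSpace E]
  [AddCommGroup F] [Module ℝ F] [MeasurableSpace F]

/-- The Prékopa–Leindler inequality for a measure `μ` on a real vector space, with weights
`a + b = 1`. For Haar measures this is the functional form of the Brunn–Minkowski inequality.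
Functions with values in `ℝ≥0∞` and lower Lebesgue integrals avoid all integrability conditions. -/
def SatisfiesPrekopaLeindler (μ : Measure E) : Prop :=
  ∀ ⦃a b : ℝ⦄, 0 < a → 0 < b → a + b = 1 → ∀ ⦃f g h : E → ℝ≥0∞⦄,
    Measurable f → Measurable g → Measurable h →
    (∀ x y, f x ^ a * g y ^ b ≤ h (a • x + b • y)) →
    (∫⁻ x, f x ∂μ) ^ a * (∫⁻ x, g x ∂μ) ^ b ≤ ∫⁻ x, h x ∂μ

section Line

variable {a b : ℝ} {f g h : ℝ → ℝ≥0∞}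

theorem ofReal_mul_lintegral_add_le_of_iSup_eq_one (ha : 0 < a) (hb : 0 < b) (hab : a + b = 1)
    (hf : Measurable f) (hg : Measurable g) (hh : Measurable h)
    (hf₁ : ⨆ x, f x = 1) (hg₁ : ⨆ x, g x = 1)
    (hfgh : ∀ x y, f x ^ a * g y ^ b ≤ h (a • x + b • y)) :
    ENNReal.ofReal a * (∫⁻ x, f x) + ENNReal.ofReal b * (∫⁻ x, g x) ≤ ∫⁻ x, h x := by
  have f_le : ∀ x, f x ≤ 1 := fun x => hf₁ ▸ le_iSup f x
  have g_le : ∀ x, g x ≤ 1 := fun x => hg₁ ▸ le_iSup g x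
  have min_le : ∀ x, min (h x) 1 ≤ 1 := fun x => min_le_right _ _
  have ne_top : ∀ {k : ℝ → ℝ≥0∞}, (∀ x, k x ≤ 1) → ∀ x, k x ≠ ∞ :=
    fun hk x => ne_top_of_le_ne_top ENNReal.one_ne_top (hk x)
  have superlevel_le : ∀ t : ℝ,
      ENNReal.ofReal a * volume {x | ENNReal.ofReal t < f x} +
        ENNReal.ofReal b * volume {x | ENNReal.ofReal t < g x} ≤
      volume {x | ENNReal.ofReal t < min (h x) 1} := by
    intro t
    rcases lt_or_ge (ENNReal.ofReal t) 1 with ht | ht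
    · simpa only [lt_min_iff, ht, and_true] using
        ofReal_mul_volume_superlevel_add_le ha hb hab hf hg hfgh
          (lt_iSup_iff.1 (hf₁ ▸ ht)) (lt_iSup_iff.1 (hg₁ ▸ ht))
    · simp only [((f_le _).trans ht).not_gt, ((g_le _).trans ht).not_gt, ofPred_false,
        measure_empty, mul_zero, add_zero, zero_le]
  calc ENNReal.ofReal a * (∫⁻ x, f x) + ENNReal.ofReal b * (∫⁻ x, g x)
      ≤ ∫⁻ t in Ioi (0 : ℝ), (ENNReal.ofReal a * volume {x | ENNReal.ofReal t < f x} +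
          ENNReal.ofReal b * volume {x | ENNReal.ofReal t < g x}) := by
        rw [lintegral_eq_lintegral_measure_ofReal_lt volume hf (ne_top f_le),
          lintegral_eq_lintegral_measure_ofReal_lt volume hg (ne_top g_le),
          ← lintegral_const_mul' _ _ ENNReal.ofReal_ne_top,
          ← lintegral_const_mul' _ _ ENNReal.ofReal_ne_top]
        exact le_lintegral_add _ _
    _ ≤ ∫⁻ t in Ioi (0 : ℝ), volume {x | ENNReal.ofReal t < min (h x) 1} :=
        lintegral_mono superlevel_le
    _ = ∫⁻ x, min (h x) 1 :=
        (lintegral_eq_lintegral_measure_ofReal_lt volume (hh.min measurable_const)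
          (ne_top min_le)).symm
    _ ≤ ∫⁻ x, h x := lintegral_mono fun x => min_le_left _ _

theorem lintegral_rpow_mul_lintegral_rpow_le_of_iSup_ne_top (ha : 0 < a) (hb : 0 < b)
    (hab : a + b = 1) (hf : Measurable f) (hg : Measurable g) (hh : Measurable h)
    (hf_top : ⨆ x, f x ≠ ∞) (hg_top : ⨆ x, g x ≠ ∞)
    (hfgh : ∀ x y, f x ^ a * g y ^ b ≤ h (a • x + b • y)) :
    (∫⁻ x, f x) ^ a * (∫⁻ x, g x) ^ b ≤ ∫⁻ x, h x := by
  set F := ⨆ x, f x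
  set G := ⨆ x, g x
  rcases eq_or_ne F 0 with hF₀ | hF₀
  · have f_eq_zero : ∀ x, f x = 0 := ENNReal.iSup_eq_zero.1 hF₀
    simp [f_eq_zero, ha]
  rcases eq_or_ne G 0 with hG₀ | hG₀
  · have g_eq_zero : ∀ x, g x = 0 := ENNReal.iSup_eq_zero.1 hG₀
    simp [g_eq_zero, hb]
  set c := F⁻¹ ^ a * G⁻¹ ^ b with hc
  have mul_rpow_mul_rpow (u v : ℝ≥0∞) : (F⁻¹ * u) ^ a * (G⁻¹ * v) ^ b = c * (u ^ a * v ^ b) := by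
    rw [ENNReal.mul_rpow_of_nonneg _ _ ha.le, ENNReal.mul_rpow_of_nonneg _ _ hb.le,
      mul_mul_mul_comm]
  have c_ne_zero : c ≠ 0 := by simp [hc, hf_top, hg_top, hF₀, hG₀]
  have c_ne_top : c ≠ ∞ := ENNReal.mul_ne_top
    (ENNReal.rpow_ne_top_of_nonneg ha.le (ENNReal.inv_ne_top.2 hF₀))
    (ENNReal.rpow_ne_top_of_nonneg hb.le (ENNReal.inv_ne_top.2 hG₀))
  refine (ENNReal.mul_le_mul_iff_right c_ne_zero c_ne_top).1 ?_
  calc c * ((∫⁻ x, f x) ^ a * (∫⁻ x, g x) ^ b)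
      = (∫⁻ x, F⁻¹ * f x) ^ a * (∫⁻ x, G⁻¹ * g x) ^ b := by
        rw [lintegral_const_mul _ hf, lintegral_const_mul _ hg, mul_rpow_mul_rpow]
    _ ≤ ENNReal.ofReal a * (∫⁻ x, F⁻¹ * f x) + ENNReal.ofReal b * (∫⁻ x, G⁻¹ * g x) :=
        ennreal_geom_mean_le_arith_mean2_weighted ha hb hab _ _
    _ ≤ ∫⁻ x, c * h x := by
        refine ofReal_mul_lintegral_add_le_of_iSup_eq_one ha hb hab (hf.const_mul _)
          (hg.const_mul _) (hh.const_mul _) ?_ ?_ fun x y => ?_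
        · rw [← ENNReal.mul_iSup, ENNReal.inv_mul_cancel hF₀ hf_top]
        · rw [← ENNReal.mul_iSup, ENNReal.inv_mul_cancel hG₀ hg_top]
        · rw [mul_rpow_mul_rpow]
          gcongr
          exact hfgh x y
    _ = c * ∫⁻ x, h x := lintegral_const_mul _ hh

theorem satisfiesPrekopaLeindler_volume_real :
    SatisfiesPrekopaLeindler (volume : Measure ℝ) := by
  intro a b ha hb hab f g h hf hg hh hfgh
  rcases eq_or_ne (∫⁻ x, f x) 0 with hf₀ | hf₀
  · simp [hf₀, ha]
  rcases eq_or_ne (∫⁻ x, g x) 0 with hg₀ | hg₀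
  · simp [hg₀, hb]
  have truncated_tendsto : Tendsto
      (fun N : ℕ => (∫⁻ x, min (f x) N) ^ a * (∫⁻ x, min (g x) N) ^ b) atTop
      (𝓝 ((∫⁻ x, f x) ^ a * (∫⁻ x, g x) ^ b)) :=
    ENNReal.Tendsto.mul ((tendsto_lintegral_min_natCast volume hf).ennrpow_const a)
      (.inl (ENNReal.rpow_pos_of_nonneg (pos_iff_ne_zero.2 hf₀) ha.le).ne')
      ((tendsto_lintegral_min_natCast volume hg).ennrpow_const b)
      (.inl (ENNReal.rpow_pos_of_nonneg (pos_iff_ne_zero.2 hg₀) hb.le).ne')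
  have iSup_min_ne_top (k : ℝ → ℝ≥0∞) (N : ℕ) : ⨆ x, min (k x) (N : ℝ≥0∞) ≠ ∞ :=
    ne_top_of_le_ne_top (ENNReal.natCast_ne_top N) (iSup_le fun x => min_le_right _ _)
  refine le_of_tendsto' truncated_tendsto fun N => ?_
  refine lintegral_rpow_mul_lintegral_rpow_le_of_iSup_ne_top ha hb hab
    (hf.min measurable_const) (hg.min measurable_const) hh
    (iSup_min_ne_top f N) (iSup_min_ne_top g N) fun x y => ?_
  calc min (f x) N ^ a * min (g y) N ^ b ≤ f x ^ a * g y ^ b := by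
        gcongr <;> exact min_le_left _ _
    _ ≤ h (a • x + b • y) := hfgh x y

end Line

theorem satisfiesPrekopaLeindler_dirac (x : E) : SatisfiesPrekopaLeindler (Measure.dirac x) := by
  intro a b _ _ hab f g h hf hg hh hfgh
  rw [lintegral_dirac' _ hf, lintegral_dirac' _ hg, lintegral_dirac' _ hh]
  simpa only [← add_smul, hab, one_smul] using hfgh x x

namespace SatisfiesPrekopaLeindler

variable {μ : Measure E} {ν : Measure F}

theorem smul (hμ : SatisfiesPrekopaLeindler μ) (c : ℝ≥0∞) :
    SatisfiesPrekopaLeindler (c • μ) := by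
  intro a b ha hb hab f g h hf hg hh hfgh
  have c_rpow_mul_rpow : c ^ a * c ^ b = c := by
    rw [← ENNReal.rpow_add_of_nonneg _ _ ha.le hb.le, hab, ENNReal.rpow_one]
  simp only [lintegral_smul_measure, smul_eq_mul]
  rw [ENNReal.mul_rpow_of_nonneg _ _ ha.le, ENNReal.mul_rpow_of_nonneg _ _ hb.le,
    mul_mul_mul_comm, c_rpow_mul_rpow]
  gcongr
  exact hμ ha hb hab hf hg hh hfgh

theorem map (hμ : SatisfiesPrekopaLeindler μ) (L : E →ₗ[ℝ] F) (hL : Measurable L) :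
    SatisfiesPrekopaLeindler (μ.map L) := by
  intro a b ha hb hab f g h hf hg hh hfgh
  rw [lintegral_map hf hL, lintegral_map hg hL, lintegral_map hh hL]
  refine hμ ha hb hab (hf.comp hL) (hg.comp hL) (hh.comp hL) fun x y => ?_
  simpa only [Function.comp_apply, map_add, map_smul] using hfgh (L x) (L y)

theorem prod [SFinite ν] (hμ : SatisfiesPrekopaLeindler μ) (hν : SatisfiesPrekopaLeindler ν) :
    SatisfiesPrekopaLeindler (μ.prod ν) := by
  intro a b ha hb hab f g h hf hg hh hfgh
  rw [lintegral_prod _ hf.aemeasurable, lintegral_prod _ hg.aemeasurable,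
    lintegral_prod _ hh.aemeasurable]
  exact hμ ha hb hab hf.lintegral_prod_right' hg.lintegral_prod_right' hh.lintegral_prod_right'
    fun x₁ x₂ => hν ha hb hab (hf.comp measurable_prodMk_left) (hg.comp measurable_prodMk_left)
      (hh.comp measurable_prodMk_left) fun y₁ y₂ => hfgh (x₁, y₁) (x₂, y₂)

theorem pi {n : ℕ} {X : Fin n → Type*} [∀ i, AddCommGroup (X i)] [∀ i, Module ℝ (X i)]
    [∀ i, MeasurableSpace (X i)] {μ : ∀ i, Measure (X i)} [∀ i, SigmaFinite (μ i)]
    (hμ : ∀ i, SatisfiesPrekopaLeindler (μ i)) : SatisfiesPrekopaLeindler (Measure.pi μ) := by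
  induction n with
  | zero =>
    rw [Measure.pi_of_empty μ]
    exact satisfiesPrekopaLeindler_dirac _
  | succ n ih =>
    have cons_preserving := (measurePreserving_piFinSuccAbove μ 0).symm
    have coe_cons : ⇑(MeasurableEquiv.piFinSuccAbove X 0).symm = Fin.consLinearEquiv ℝ X := by
      ext p i
      cases i using Fin.cases <;> rfl
    rw [← cons_preserving.map_eq, coe_cons]
    exact ((hμ 0).prod (ih fun i => hμ i.succ)).map (Fin.consLinearEquiv ℝ X).toLinearMap
      (coe_cons ▸ cons_preserving.measurable)

end SatisfiesPrekopaLeindler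

theorem satisfiesPrekopaLeindler_of_isAddHaarMeasure {E : Type*} [NormedAddCommGroup E]
    [NormedSpace ℝ E] [FiniteDimensional ℝ E] [MeasurableSpace E] [BorelSpace E]
    (μ : Measure E) [μ.IsAddHaarMeasure] : SatisfiesPrekopaLeindler μ := by
  let L : (Fin (Module.finrank ℝ E) → ℝ) ≃L[ℝ] E := .ofFinrankEq (by simp)
  rw [Measure.isAddLeftInvariant_eq_smul μ (volume.map L), ← Measure.coe_nnreal_smul]
  exact ((SatisfiesPrekopaLeindler.pi fun _ => satisfiesPrekopaLeindler_volume_real).map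
    L.toLinearMap L.continuous.measurable).smul _


end PrekopaLeindler

section Prekopa

variable {E F : Type*} [AddCommGroup E] [Module ℝ E] [MeasurableSpace E] {μ : Measure E}
  [AddCommGroup F] [Module ℝ F]

theorem SatisfiesPrekopaLeindler.integral_exp_neg_rpow_mul_le (hμ : SatisfiesPrekopaLeindler μ)
    {a b : ℝ} (ha : 0 < a) (hb : 0 < b) (hab : a + b = 1) {φ ψ χ : E → ℝ}
    (hφ : Measurable φ) (hψ : Measurable ψ) (hχ : Measurable χ)
    (hφ_int : Integrable (fun x => Real.exp (-φ x)) μ)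
    (hψ_int : Integrable (fun x => Real.exp (-ψ x)) μ)
    (hχ_int : Integrable (fun x => Real.exp (-χ x)) μ)
    (hχ_le : ∀ x y, χ (a • x + b • y) ≤ a * φ x + b * ψ y) :
    (∫ x, Real.exp (-φ x) ∂μ) ^ a * (∫ x, Real.exp (-ψ x) ∂μ) ^ b ≤
      ∫ x, Real.exp (-χ x) ∂μ := by
  have integral_nonneg (θ : E → ℝ) : 0 ≤ ∫ x, Real.exp (-θ x) ∂μ :=
    integral_nonneg fun x => (Real.exp_pos _).le
  have lintegral_eq {θ : E → ℝ} (hθ : Integrable (fun x => Real.exp (-θ x)) μ) :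
      ∫⁻ x, ENNReal.ofReal (Real.exp (-θ x)) ∂μ = ENNReal.ofReal (∫ x, Real.exp (-θ x) ∂μ) :=
    (ofReal_integral_eq_lintegral_ofReal hθ (.of_forall fun x => (Real.exp_pos _).le)).symm
  have exp_mul_exp_le (x y : E) :
      ENNReal.ofReal (Real.exp (-φ x)) ^ a * ENNReal.ofReal (Real.exp (-ψ y)) ^ b ≤
        ENNReal.ofReal (Real.exp (-χ (a • x + b • y))) := by
    rw [ENNReal.ofReal_rpow_of_pos (Real.exp_pos _), ENNReal.ofReal_rpow_of_pos (Real.exp_pos _),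
      ← ENNReal.ofReal_mul (by positivity), ← Real.exp_mul, ← Real.exp_mul, ← Real.exp_add]
    gcongr
    linarith [hχ_le x y]
  have key := hμ ha hb hab hφ.fun_neg.exp.ennreal_ofReal hψ.fun_neg.exp.ennreal_ofReal
    hχ.fun_neg.exp.ennreal_ofReal exp_mul_exp_le
  rwa [lintegral_eq hφ_int, lintegral_eq hψ_int, lintegral_eq hχ_int,
    ENNReal.ofReal_rpow_of_nonneg (integral_nonneg φ) ha.le,
    ENNReal.ofReal_rpow_of_nonneg (integral_nonneg ψ) hb.le,
    ← ENNReal.ofReal_mul (Real.rpow_nonneg (integral_nonneg φ) a),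
    ENNReal.ofReal_le_ofReal_iff (integral_nonneg χ)] at key

theorem SatisfiesPrekopaLeindler.concaveOn_log_integral_exp_neg [NeZero μ]
    (hμ : SatisfiesPrekopaLeindler μ) {s : Set F} {Φ : F → E → ℝ}
    (hΦ : ConvexOn ℝ (s ×ˢ univ) fun q : F × E => Φ q.1 q.2)
    (hΦ_meas : ∀ t ∈ s, Measurable (Φ t))
    (hΦ_int : ∀ t ∈ s, Integrable (fun x => Real.exp (-Φ t x)) μ) :
    ConcaveOn ℝ s fun t => Real.log (∫ x, Real.exp (-Φ t x) ∂μ) := by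
  have hs : Convex ℝ s := by
    simpa only [LinearMap.coe_fst, fst_image_prod _ univ_nonempty] using
      hΦ.1.linear_image (LinearMap.fst ℝ F E)
  rw [concaveOn_iff_forall_pos]
  refine ⟨hs, fun t₀ ht₀ t₁ ht₁ a b ha hb hab => ?_⟩
  have ht := hs ht₀ ht₁ ha.le hb.le hab
  have integral_pos {t : F} (ht : t ∈ s) : 0 < ∫ x, Real.exp (-Φ t x) ∂μ :=
    integral_exp_pos (hΦ_int t ht)
  simp only [smul_eq_mul]
  rw [← Real.log_rpow (integral_pos ht₀), ← Real.log_rpow (integral_pos ht₁),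
    ← Real.log_mul (Real.rpow_pos_of_pos (integral_pos ht₀) a).ne'
      (Real.rpow_pos_of_pos (integral_pos ht₁) b).ne']
  refine Real.log_le_log (mul_pos (Real.rpow_pos_of_pos (integral_pos ht₀) a)
    (Real.rpow_pos_of_pos (integral_pos ht₁) b)) ?_
  exact hμ.integral_exp_neg_rpow_mul_le ha hb hab (hΦ_meas t₀ ht₀) (hΦ_meas t₁ ht₁)
    (hΦ_meas _ ht) (hΦ_int t₀ ht₀) (hΦ_int t₁ ht₁) (hΦ_int _ ht) fun x y =>
      hΦ.2 (x := (t₀, x)) (y := (t₁, y)) ⟨ht₀, mem_univ x⟩ ⟨ht₁, mem_univ y⟩ ha.le hb.le hab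

end Prekopa

theorem integrable_exp_neg_mul_norm {E : Type*} [NormedAddCommGroup E] [NormedSpace ℝ E]
    [FiniteDimensional ℝ E] [MeasurableSpace E] [BorelSpace E] (μ : Measure E)
    [μ.IsAddHaarMeasure] {ε : ℝ} (hε : 0 < ε) :
    Integrable (fun x => Real.exp (-(ε * ‖x‖))) μ := by
  rcases subsingleton_or_nontrivial E with _ | _
  · exact continuous_of_discreteTopology.integrable_of_hasCompactSupport (.of_compactSpace _)
  · have hdim : -1 < ((Module.finrank ℝ E - 1 : ℕ) : ℝ) :=
      neg_one_lt_zero.trans_le (Nat.cast_nonneg _)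
    rw [integrable_fun_norm_addHaar μ (f := fun r => Real.exp (-(ε * r)))]
    simpa only [Real.rpow_natCast, Real.rpow_one, neg_mul, smul_eq_mul] using
      integrableOn_rpow_mul_exp_neg_mul_rpow hdim one_pos hε

section BoundedImage

open scoped Pointwise

variable {α V : Type*} [NormedAddCommGroup V] [NormedSpace ℝ V]

theorem isBounded_image_smul_add_smul {P : Set α} {u v : α → V}
    (hu : Bornology.IsBounded (u '' P)) (hv : Bornology.IsBounded (v '' P)) (a b : ℝ) :
    Bornology.IsBounded ((a • u + b • v) '' P) := by
  refine ((hu.smul₀ a).add (hv.smul₀ b)).subset ?_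
  rintro _ ⟨p, hp, rfl⟩
  exact add_mem_add (smul_mem_smul_set (mem_image_of_mem u hp))
    (smul_mem_smul_set (mem_image_of_mem v hp))

theorem convex_setOf_isBounded_image (P : Set α) :
    Convex ℝ {u : α → V | Bornology.IsBounded (u '' P)} :=
  fun _ hu _ hv a b _ _ _ => isBounded_image_smul_add_smul hu hv a b

end BoundedImage

section LegendreOn

variable {E : Type*} [NormedAddCommGroup E] [InnerProductSpace ℝ E] {P : Set E} {u : E → ℝ}

/-- The Legendre transform over `P` of a function `u : P → ℝ`, extended arbitrarily to the ambient
space. The supremum is real-valued, so it is meaningful only when the family is bounded above, for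
instance when `P` is bounded and `u` is bounded below on `P`. -/
noncomputable def legendreOn (P : Set E) (u : E → ℝ) (x : E) : ℝ :=
  ⨆ p : P, (⟪(p : E), x⟫_ℝ - u p)

theorem bddAbove_range_inner_sub (hP : Bornology.IsBounded P) (hu : BddBelow (u '' P)) (x : E) :
    BddAbove (range fun p : P => ⟪(p : E), x⟫_ℝ - u p) := by
  obtain ⟨R, hR⟩ := hP.exists_norm_le
  obtain ⟨m, hm⟩ := hu
  refine ⟨R * ‖x‖ - m, ?_⟩
  rintro _ ⟨p, rfl⟩
  calc ⟪(p : E), x⟫_ℝ - u p ≤ ‖(p : E)‖ * ‖x‖ - m :=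
        sub_le_sub (real_inner_le_norm _ _) (hm (mem_image_of_mem u p.2))
    _ ≤ R * ‖x‖ - m := by gcongr; exact hR p p.2

theorem inner_sub_le_legendreOn (hP : Bornology.IsBounded P) (hu : BddBelow (u '' P)) {p : E}
    (hp : p ∈ P) (x : E) : ⟪p, x⟫_ℝ - u p ≤ legendreOn P u x :=
  le_ciSup (bddAbove_range_inner_sub hP hu x) ⟨p, hp⟩

theorem convexOn_legendreOn (hP : Bornology.IsBounded P) (hP₀ : P.Nonempty) :
    ConvexOn ℝ ({u : E → ℝ | Bornology.IsBounded (u '' P)} ×ˢ univ)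
      fun q : (E → ℝ) × E => legendreOn P q.1 q.2 := by
  have := hP₀.to_subtype
  refine ⟨(convex_setOf_isBounded_image P).prod convex_univ, ?_⟩
  rintro ⟨u, x⟩ ⟨hu : Bornology.IsBounded (u '' P), -⟩ ⟨v, y⟩
    ⟨hv : Bornology.IsBounded (v '' P), -⟩ a b ha hb -
  refine ciSup_le fun p => ?_
  calc ⟪(p : E), a • x + b • y⟫_ℝ - (a * u p + b * v p)
      = a * (⟪(p : E), x⟫_ℝ - u p) + b * (⟪(p : E), y⟫_ℝ - v p) := by
        rw [inner_add_right, real_inner_smul_right, real_inner_smul_right]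
        ring
    _ ≤ a * legendreOn P u x + b * legendreOn P v y := by
        gcongr
        · exact inner_sub_le_legendreOn hP hu.bddBelow p.2 x
        · exact inner_sub_le_legendreOn hP hv.bddBelow p.2 y

theorem mul_norm_sub_le_legendreOn (hP : Bornology.IsBounded P) (hu : BddBelow (u '' P))
    {ε M : ℝ} (hε : 0 ≤ ε) (hball : Metric.closedBall 0 ε ⊆ convexHull ℝ P)
    (hM : ∀ p ∈ P, u p ≤ M) (x : E) : ε * ‖x‖ - M ≤ legendreOn P u x := by
  -- In the direction of `x`, the ball of radius `ε` reaches out to `q`.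
  set q : E := (ε / ‖x‖) • x
  have hq : q ∈ convexHull ℝ P := hball <| by
    rw [mem_closedBall_zero_iff, norm_smul, Real.norm_of_nonneg (by positivity)]
    calc ε / ‖x‖ * ‖x‖ = ε * (‖x‖ / ‖x‖) := by rw [div_mul_eq_mul_div, mul_div_assoc]
      _ ≤ ε := mul_le_of_le_one_right hε (div_self_le_one ‖x‖)
  have inner_q : ⟪q, x⟫_ℝ = ε * ‖x‖ := by
    rw [real_inner_smul_left, real_inner_self_eq_norm_mul_norm, ← mul_assoc]
    rcases eq_or_ne ‖x‖ 0 with hx | hx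
    · simp [hx]
    · rw [div_mul_cancel₀ _ hx]
  obtain ⟨p, hp, hqp⟩ : ∃ p ∈ P, ⟪q, x⟫_ℝ ≤ ⟪p, x⟫_ℝ :=
    (((innerₗ E).flip x).convexOn convex_univ).exists_ge_of_mem_convexHull (subset_univ P) hq
  calc ε * ‖x‖ - M ≤ ⟪p, x⟫_ℝ - u p := sub_le_sub (inner_q ▸ hqp) (hM p hp)
    _ ≤ legendreOn P u x := inner_sub_le_legendreOn hP hu hp x

variable [FiniteDimensional ℝ E] [MeasurableSpace E] [BorelSpace E]

theorem measurable_legendreOn (hP : Bornology.IsBounded P) (hP₀ : P.Nonempty)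
    (hu : Bornology.IsBounded (u '' P)) : Measurable (legendreOn P u) := by
  have hconv : ConvexOn ℝ univ (legendreOn P u) :=
    ⟨convex_univ, fun x _ y _ a b ha hb hab => by
      simpa only [Prod.smul_mk, Prod.mk_add_mk, ← add_smul, hab, one_smul] using
        (convexOn_legendreOn hP hP₀).2 (x := (u, x)) (y := (u, y)) ⟨hu, mem_univ x⟩
          ⟨hu, mem_univ y⟩ ha hb hab⟩
  exact hconv.locallyLipschitz.continuous.measurable

variable (μ : Measure E) [μ.IsAddHaarMeasure]

theorem integrable_exp_neg_legendreOn (hP : Bornology.IsBounded P)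
    (h0 : (0 : E) ∈ interior (convexHull ℝ P)) (hu : Bornology.IsBounded (u '' P)) :
    Integrable (fun x => Real.exp (-legendreOn P u x)) μ := by
  have hP₀ : P.Nonempty := convexHull_nonempty_iff.1 ⟨0, interior_subset h0⟩
  obtain ⟨ε, hε, hball⟩ := Metric.nhds_basis_closedBall.mem_iff.1 (mem_interior_iff_mem_nhds.1 h0)
  obtain ⟨M, hM⟩ := hu.bddAbove
  refine ((integrable_exp_neg_mul_norm μ hε).const_mul (Real.exp M)).mono'
    (measurable_legendreOn hP hP₀ hu).neg.exp.aestronglyMeasurable (.of_forall fun x => ?_)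
  rw [Real.norm_of_nonneg (Real.exp_pos _).le, ← Real.exp_add, Real.exp_le_exp]
  linarith [mul_norm_sub_le_legendreOn hP hu.bddBelow hε.le hball
    (fun p hp => hM (mem_image_of_mem u hp)) x]

theorem concaveOn_log_integral_exp_neg_legendreOn (hP : Bornology.IsBounded P)
    (h0 : (0 : E) ∈ interior (convexHull ℝ P)) :
    ConcaveOn ℝ {u : E → ℝ | Bornology.IsBounded (u '' P)}
      fun u => Real.log (∫ x, Real.exp (-legendreOn P u x) ∂μ) :=
  have hP₀ : P.Nonempty := convexHull_nonempty_iff.1 ⟨0, interior_subset h0⟩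
  (satisfiesPrekopaLeindler_of_isAddHaarMeasure μ).concaveOn_log_integral_exp_neg
    (convexOn_legendreOn hP hP₀) (fun _ hu => measurable_legendreOn hP hP₀ hu)
    (fun _ hu => integrable_exp_neg_legendreOn μ hP h0 hu)

theorem statement13_general (hP : Bornology.IsBounded P)
    (h0 : (0 : E) ∈ interior (convexHull ℝ P)) {u₀ u₁ : E → ℝ} {M : ℝ}
    (hb0 : ∀ p ∈ P, |u₀ p| ≤ M) (hb1 : ∀ p ∈ P, |u₁ p| ≤ M) :
    (∀ t : ℝ, Integrable (fun x => Real.exp (-(⨆ p : P,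
      (⟪(p : E), x⟫_ℝ - (1 - t) * u₀ p - t * u₁ p)))) μ) ∧
    ConcaveOn ℝ univ (fun t : ℝ => Real.log (∫ x, Real.exp (-(⨆ p : P,
      (⟪(p : E), x⟫_ℝ - (1 - t) * u₀ p - t * u₁ p))) ∂μ)) := by
  have isBounded_image {u : E → ℝ} (hu : ∀ p ∈ P, |u p| ≤ M) : Bornology.IsBounded (u '' P) :=
    isBounded_iff_forall_norm_le.2 ⟨M, forall_mem_image.2 hu⟩
  have isBounded_image_lineMap (t : ℝ) :
      Bornology.IsBounded (AffineMap.lineMap (k := ℝ) u₀ u₁ t '' P) := by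
    rw [AffineMap.lineMap_apply_module]
    exact isBounded_image_smul_add_smul (isBounded_image hb0) (isBounded_image hb1) (1 - t) t
  have eq_legendreOn (t : ℝ) (x : E) :
      ⨆ p : P, (⟪(p : E), x⟫_ℝ - (1 - t) * u₀ p - t * u₁ p) =
        legendreOn P (AffineMap.lineMap u₀ u₁ t) x := by
    simp only [legendreOn, AffineMap.lineMap_apply_module, Pi.add_apply, Pi.smul_apply,
      smul_eq_mul, sub_sub]
  simp only [eq_legendreOn]
  refine ⟨fun t => integrable_exp_neg_legendreOn μ hP h0 (isBounded_image_lineMap t), ?_⟩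
  exact ((concaveOn_log_integral_exp_neg_legendreOn μ hP h0).comp_affineMap
    (AffineMap.lineMap u₀ u₁)).subset (fun t _ => isBounded_image_lineMap t) convex_univ

end LegendreOn

/-- For bounded functions `u₀, u₁` on a convex body `P`
containing `0` in its interior, with
`φ_t(x) := sup_{p ∈ P} (⟨p, x⟩ - (1-t)u₀(p) - t u₁(p))`, the function
`t ↦ log ∫ e^{-φ_t} dx` is finite (the integrand is integrable) and concave
on `[0,1]`. -/
theorem statement13 {n : ℕ} (P : Set (EuclideanSpace ℝ (Fin n)))
    (hPcomp : IsCompact P) (hPconv : Convex ℝ P)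
    (h0 : (0 : EuclideanSpace ℝ (Fin n)) ∈ interior P)
    (u₀ u₁ : EuclideanSpace ℝ (Fin n) → ℝ)
    (M : ℝ) (hb0 : ∀ p ∈ P, |u₀ p| ≤ M) (hb1 : ∀ p ∈ P, |u₁ p| ≤ M) :
    (∀ t ∈ Set.Icc (0 : ℝ) 1,
      Integrable (fun x => Real.exp (-(⨆ p : P,
        (⟪(p : EuclideanSpace ℝ (Fin n)), x⟫_ℝ
          - (1 - t) * u₀ (p : EuclideanSpace ℝ (Fin n))
          - t * u₁ (p : EuclideanSpace ℝ (Fin n))))))) ∧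
    ConcaveOn ℝ (Set.Icc (0 : ℝ) 1) (fun t =>
      Real.log (∫ x, Real.exp (-(⨆ p : P,
        (⟪(p : EuclideanSpace ℝ (Fin n)), x⟫_ℝ
          - (1 - t) * u₀ (p : EuclideanSpace ℝ (Fin n))
          - t * u₁ (p : EuclideanSpace ℝ (Fin n))))))) := by
  have h := statement13_general volume hPcomp.isBounded
    (interior_mono (subset_convexHull ℝ P) h0) hb0 hb1
  exact ⟨fun t _ => h.1 t, h.2.subset (Set.subset_univ _) (convex_Icc 0 1)⟩
end

section
/- Let P ⊆ ℝⁿ be a convex body containing 0, and let u : P → ℝ be a continuous convex function with u(0) = 0. Then the function t ↦ t^{−(n+1)} ∫_{tP} u(p) dp is monotone nondecreasing on (0,1], i.e. for all 0 < s ≤ t ≤ 1 one has s^{−(n+1)} ∫_{sP} u dp ≤ t^{−(n+1)} ∫_{tP} u dp; moreover, if u is the restriction to P of a linear function, then this function of t is constant on (0,1]. -/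
/-!
The substitution `p = t • x` turns `t ^ (-(n + 1)) ∫_{tP} u(p) dp` into `∫_P t⁻¹ u(t x) dx`. Since
`u 0 = 0`, the integrand is the slope at `0` of `u` along the ray through `x`. Slopes of a convex
function increase with `t`, and those of a linear function do not depend on `t`.
-/

open scoped InnerProductSpace
open MeasureTheory
open scoped Pointwise

open Module Set

section Convex

variable {𝕜 E β : Type*} [Ring 𝕜] [PartialOrder 𝕜] [IsOrderedAddMonoid 𝕜] [AddCommMonoid E]
  [Module 𝕜 E] [AddCommMonoid β] [PartialOrder β] [IsOrderedAddMonoid β] [Module 𝕜 β]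
  [PosSMulMono 𝕜 β]

theorem map_smul_le_smul_map_of_convexOn {s : Set E} {u : E → β} (hu : ConvexOn 𝕜 s u)
    (h0 : (0 : E) ∈ s) (hu0 : u 0 ≤ 0) {x : E} (hx : x ∈ s) {r : 𝕜} (hr0 : 0 ≤ r) (hr1 : r ≤ 1) :
    u (r • x) ≤ r • u x :=
  calc
    u (r • x) = u (r • x + (1 - r) • (0 : E)) := by rw [smul_zero, add_zero]
    _ ≤ r • u x + (1 - r) • u 0 := hu.2 hx h0 hr0 (sub_nonneg.2 hr1) (add_sub_cancel r 1)
    _ ≤ r • u x :=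
      add_le_of_nonpos_right (smul_nonpos_of_nonneg_of_nonpos (sub_nonneg.2 hr1) hu0)

end Convex

theorem monotoneOn_map_smul_div {𝕜 E : Type*} [Field 𝕜] [LinearOrder 𝕜] [IsStrictOrderedRing 𝕜]
    [AddCommGroup E] [Module 𝕜 E] {P : Set E} (hP : StarConvex 𝕜 0 P) {u : E → 𝕜}
    (hu : ∀ x ∈ P, ∀ r ∈ Ioc (0 : 𝕜) 1, u (r • x) ≤ r * u x) {x : E} (hx : x ∈ P) :
    MonotoneOn (fun t : 𝕜 => u (t • x) / t) (Ioc 0 1) := by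
  rintro s ⟨hs0, -⟩ t ⟨ht0, ht1⟩ hst
  have htx : t • x ∈ P := hP.smul_mem hx ht0.le ht1
  have hsub : u (s • x) ≤ s / t * u (t • x) := by
    have h := hu _ htx (s / t) ⟨div_pos hs0 ht0, (div_le_one ht0).2 hst⟩
    rwa [smul_smul, div_mul_cancel₀ _ ht0.ne'] at h
  calc
    u (s • x) / s ≤ s / t * u (t • x) / s := by gcongr
    _ = u (t • x) / t := by field_simp

section Integral

variable {E F : Type*} [NormedAddCommGroup E] [NormedSpace ℝ E] [FiniteDimensional ℝ E]
  [MeasurableSpace E] [BorelSpace E] (μ : Measure E) [μ.IsAddHaarMeasure] [NormedAddCommGroup F]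

theorem integrableOn_comp_smul_iff (f : E → F) (s : Set E) {t : ℝ} (ht : t ≠ 0) :
    IntegrableOn (fun x => f (t • x)) s μ ↔ IntegrableOn f (t • s) μ := by
  have hscale : ENNReal.ofReal |(t ^ finrank ℝ E)⁻¹| ≠ 0 := by
    rw [Ne, ENNReal.ofReal_eq_zero, not_le]
    positivity
  have hpre : (t • ·) ⁻¹' (t • s) = s := preimage_image_eq s (smul_right_injective E ht)
  have h := (measurableEmbedding_const_smul₀ (α := E) ht).integrableOn_map_iff
    (f := f) (μ := μ) (s := t • s)
  rw [hpre, Measure.map_addHaar_smul μ ht, IntegrableOn, Measure.restrict_smul,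
    integrable_smul_measure hscale ENNReal.ofReal_ne_top] at h
  exact h.symm

variable [NormedSpace ℝ F]

theorem inv_pow_smul_setIntegral_smul_set (f : E → F) (s : Set E) {t : ℝ} (ht : 0 < t) :
    (t ^ (finrank ℝ E + 1))⁻¹ • ∫ x in t • s, f x ∂μ = ∫ x in s, t⁻¹ • f (t • x) ∂μ := by
  rw [integral_smul, Measure.setIntegral_comp_smul_of_pos μ f s ht, smul_smul, pow_succ,
    mul_inv_rev]

theorem inv_pow_smul_setIntegral_smul_set_of_homogeneous {f : E → F} {s : Set E}
    (hs : NullMeasurableSet s μ) {t : ℝ} (ht : 0 < t) (hf : ∀ x ∈ s, f (t • x) = t • f x) :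
    (t ^ (finrank ℝ E + 1))⁻¹ • ∫ x in t • s, f x ∂μ = ∫ x in s, f x ∂μ := by
  rw [inv_pow_smul_setIntegral_smul_set μ f s ht]
  refine setIntegral_congr_fun₀ hs fun x hx => ?_
  simp only [hf x hx, inv_smul_smul₀ ht.ne']

variable {μ} {P : Set E} {u : E → ℝ}

theorem monotoneOn_setIntegral_smul_set_div_pow (hP : StarConvex ℝ 0 P)
    (hPm : NullMeasurableSet P μ) (hint : IntegrableOn u P μ)
    (hu : ∀ x ∈ P, ∀ r ∈ Ioc (0 : ℝ) 1, u (r • x) ≤ r * u x) :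
    MonotoneOn (fun t : ℝ => (∫ x in t • P, u x ∂μ) / t ^ (finrank ℝ E + 1)) (Ioc 0 1) := by
  have hslope : ∀ t ∈ Ioc (0 : ℝ) 1,
      (∫ x in t • P, u x ∂μ) / t ^ (finrank ℝ E + 1) = ∫ x in P, u (t • x) / t ∂μ := by
    intro t ht
    simpa only [smul_eq_mul, ← div_eq_inv_mul] using inv_pow_smul_setIntegral_smul_set μ u P ht.1
  have hslope_int : ∀ t ∈ Ioc (0 : ℝ) 1, IntegrableOn (fun x => u (t • x) / t) P μ := by
    intro t ht
    have hsub : t • P ⊆ P := smul_set_subset_iff.2 fun x hx => hP.smul_mem hx ht.1.le ht.2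
    exact ((integrableOn_comp_smul_iff μ u P ht.1.ne').2 (hint.mono_set hsub)).div_const t
  intro s hs t ht hst
  simp only [hslope s hs, hslope t ht]
  exact setIntegral_mono_on₀ (hslope_int s hs) (hslope_int t ht) hPm
    fun x hx => monotoneOn_map_smul_div hP hu hx hs ht hst

theorem statement18_general (hP : StarConvex ℝ 0 P) (hPm : NullMeasurableSet P μ)
    (hint : IntegrableOn u P μ) (hu : ∀ x ∈ P, ∀ r ∈ Ioc (0 : ℝ) 1, u (r • x) ≤ r * u x) :
    MonotoneOn (fun t : ℝ => (∫ x in t • P, u x ∂μ) / t ^ (finrank ℝ E + 1)) (Ioc 0 1) ∧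
      ∀ l : E →ₗ[ℝ] ℝ, EqOn u l P → ∀ t ∈ Ioc (0 : ℝ) 1,
        (∫ x in t • P, u x ∂μ) / t ^ (finrank ℝ E + 1) = ∫ x in P, u x ∂μ := by
  refine ⟨monotoneOn_setIntegral_smul_set_div_pow hP hPm hint hu, fun l hl t ht => ?_⟩
  have hhom : ∀ x ∈ P, u (t • x) = t • u x := fun x hx => by
    rw [hl (hP.smul_mem hx ht.1.le ht.2), hl hx, map_smul]
  simpa only [smul_eq_mul, ← div_eq_inv_mul] using
    inv_pow_smul_setIntegral_smul_set_of_homogeneous μ hPm ht.1 hhom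

end Integral

/-- For a continuous convex function `u` on a convex body
`P ∋ 0` with `u(0) = 0`, the function `t ↦ t^{-(n+1)} ∫_{tP} u dp` is monotone
nondecreasing on `(0,1]`, and it is constant when `u` is the restriction of a
linear function. -/
theorem statement18 {n : ℕ} (P : Set (EuclideanSpace ℝ (Fin n)))
    (hPcomp : IsCompact P) (hPconv : Convex ℝ P)
    (hPint : (interior P).Nonempty)
    (h0 : (0 : EuclideanSpace ℝ (Fin n)) ∈ P)
    (u : EuclideanSpace ℝ (Fin n) → ℝ)
    (hcont : ContinuousOn u P) (hconv : ConvexOn ℝ P u) (hu0 : u 0 = 0) :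
    (∀ s t : ℝ, 0 < s → s ≤ t → t ≤ 1 →
      (∫ p in s • P, u p) / s ^ (n + 1) ≤ (∫ p in t • P, u p) / t ^ (n + 1)) ∧
    (∀ l : EuclideanSpace ℝ (Fin n) →ₗ[ℝ] ℝ, (∀ p ∈ P, u p = l p) →
      ∀ s t : ℝ, 0 < s → s ≤ 1 → 0 < t → t ≤ 1 →
        (∫ p in s • P, u p) / s ^ (n + 1) = (∫ p in t • P, u p) / t ^ (n + 1)) := by
  have h := statement18_general (μ := volume) (hPconv.starConvex h0)
    hPcomp.measurableSet.nullMeasurableSet (hcont.integrableOn_compact hPcomp)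
    fun x hx r hr => map_smul_le_smul_map_of_convexOn hconv h0 hu0.le hx hr.1.le hr.2
  rw [finrank_euclideanSpace_fin] at h
  exact ⟨fun s t hs hst ht => h.1 ⟨hs, hst.trans ht⟩ ⟨hs.trans_le hst, ht⟩ hst,
    fun l hl s t hs hs1 ht ht1 => (h.2 l hl s ⟨hs, hs1⟩).trans (h.2 l hl t ⟨ht, ht1⟩).symm⟩
end
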